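/- For each k with 1 ≤ k ≤ L, the 2^N subcubes P_{k,K} (K ∈ Λ, P ∈ {C,D}) are pairwise disjoint and their union is the layer L_k := ∏_{i=1}^N {k−1, k, …, d_i−k} ∖ ∏_{i=1}^N {k, k+1, …, d_i−k−1}; moreover Z is the disjoint union of B_0 and the layers L_1, …, L_L. -/

import Mathlib

/-!
Fix `k` with `2k + 1 ≤ d i` for all `i` and a vector `v` of the outer box `∏ {k-1, …, d i - k}`.
Read the coordinates of `v` as a two-state automaton on the sides low (`false`) and high (`true`):
`k - 1` sends both sides to low, `d i - k` sends both sides to high, and an interior value swaps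
the sides. Then `v` lies in `P_{k,K}` exactly when the sides of the components of `P_{k,K}` form a
run of this automaton and `K` is the set of times at which the run changes state
(`mem_gcube_iff`). The initial state `p` of the run is a virtual side preceding the first
coordinate, and `|K|` is even iff the run returns to `p` after `N` steps (`even_changes_iff`). So the
subcubes `P_{k,K}` with `K` even containing `v` correspond to the fixed points of the composition
of the `N` coordinate maps. If some coordinate of `v` is extremal, the composition is constant and
has exactly one fixed point; if all are interior, it is an odd power of the swap and has none.

That the layers and `B₀` partition `Z` holds because the boxes `∏ {k, …, d i - k - 1}` decrease
with `k` from all of `Z` at `k = 0` to `B₀` at `k = L`.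
-/

open scoped BigOperators Matrix

namespace SNL

/-- `side N K b i` is `false` if the `i`-th component (0-based) of the subcube `P_K`
(`b = false` for `C`, `b = true` for `D`) is of "low" type (`{0}` or `{0,1}`),
and `true` if it is of "high" type (`{2}` or `{1,2}`), following the recursive
definition: the first component is low for `C` and high for `D`, and the type flips
from component `i` to `i+1` exactly when coordinate `i+1` belongs to `K`. -/
def side (N : ℕ) (K : Finset (Fin N)) (b : Bool) : ℕ → Bool
  | 0 => b
  | i + 1 => Bool.xor (side N K b i) (decide ((i + 1) ∈ K.image Fin.val))

/-- Lower endpoint of the `i`-th component of the subcube `P_{k,K}` of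
`Z_{d₁} × ⋯ × Z_{d_N}`, obtained from `P_K` by the coordinatewise replacements
`{0} ↦ {k-1}`, `{2} ↦ {d_i - k}`, `{0,1} ↦ {k-1, …, d_i-k-1}`,
`{1,2} ↦ {k, …, d_i-k}`. -/
def glo (N : ℕ) (d : Fin N → ℕ) (k : ℕ) (K : Finset (Fin N)) (b : Bool)
    (i : Fin N) : ℕ :=
  if i ∈ K then (if side N K b i.val then k else k - 1)
  else (if side N K b i.val then d i - k else k - 1)

/-- Upper endpoint of the `i`-th component of the subcube `P_{k,K}`. -/
def ghi (N : ℕ) (d : Fin N → ℕ) (k : ℕ) (K : Finset (Fin N)) (b : Bool)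
    (i : Fin N) : ℕ :=
  if i ∈ K then (if side N K b i.val then d i - k else d i - k - 1)
  else (if side N K b i.val then d i - k else k - 1)

/-- The `i`-th component of the subcube `P_{k,K}`, an interval of integers. -/
def gcomp (N : ℕ) (d : Fin N → ℕ) (k : ℕ) (K : Finset (Fin N)) (b : Bool)
    (i : Fin N) : Finset ℕ :=
  Finset.Icc (glo N d k K b i) (ghi N d k K b i)

/-- The subcube `P_{k,K}` of `Z = Z_{d₁} × ⋯ × Z_{d_N}` as a set of vectors. -/
def gcube (N : ℕ) (d : Fin N → ℕ) (k : ℕ) (K : Finset (Fin N)) (b : Bool) :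
    Set ((i : Fin N) → Fin (d i)) :=
  {v | ∀ i, (v i : ℕ) ∈ gcomp N d k K b i}

/-- The central subcube `B₀ = ∏ᵢ {L, L+1, …, d_i - L - 1}`. -/
def gB0 (N : ℕ) (d : Fin N → ℕ) (L : ℕ) : Set ((i : Fin N) → Fin (d i)) :=
  {v | ∀ i, (v i : ℕ) ∈ Finset.Icc L (d i - L - 1)}

/-- The `k`-th layer `L_k = ∏ᵢ {k-1, …, d_i-k} ∖ ∏ᵢ {k, …, d_i-k-1}`. -/
def layer (N : ℕ) (d : Fin N → ℕ) (k : ℕ) : Set ((i : Fin N) → Fin (d i)) :=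
  {v | ∀ i, (v i : ℕ) ∈ Finset.Icc (k - 1) (d i - k)} \
    {v | ∀ i, (v i : ℕ) ∈ Finset.Icc k (d i - k - 1)}

/-- The Fourier vector `F_A^n` attached to the interval `A = {a, …, b}` of size
`r = b - a + 1`: it is `exp(2π√-1·(m-a)·n/r)` on `A` and `0` elsewhere. -/
noncomputable def fourier (a b n : ℕ) (m : ℕ) : ℂ :=
  if m ∈ Finset.Icc a b then
    Complex.exp (2 * Real.pi * Complex.I * (((m : ℂ) - (a : ℂ)) * (n : ℂ)) /
      ((b : ℂ) - (a : ℂ) + 1))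
  else 0

/-- The product state attached to the subcube `P_{k,K}` with Fourier indices `n`. -/
noncomputable def gAtt (N : ℕ) (d : Fin N → ℕ) (k : ℕ) (K : Finset (Fin N))
    (b : Bool) (n : Fin N → ℕ) : ((i : Fin N) → Fin (d i)) → ℂ :=
  fun v => ∏ i, fourier (glo N d k K b i) (ghi N d k K b i) (n i) (v i)

/-- The product state attached to the central subcube `B₀` with Fourier indices `n`. -/
noncomputable def gAttB0 (N : ℕ) (d : Fin N → ℕ) (L : ℕ) (n : Fin N → ℕ) :
    ((i : Fin N) → Fin (d i)) → ℂ :=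
  fun v => ∏ i, fourier L (d i - L - 1) (n i) (v i)

/-- The inner product on `H_d = (Z → ℂ)`. -/
noncomputable def ginner (N : ℕ) (d : Fin N → ℕ)
    (ψ φ : ((i : Fin N) → Fin (d i)) → ℂ) : ℂ :=
  ∑ v, (starRingEnd ℂ) (ψ v) * φ v

/-- A product vector in `H_d`. -/
def gIsProdVec (N : ℕ) (d : Fin N → ℕ) (ψ : ((i : Fin N) → Fin (d i)) → ℂ) : Prop :=
  ∃ f : (i : Fin N) → Fin (d i) → ℂ, ∀ v, ψ v = ∏ i, f i (v i)

/-- The stopper state `|S⟩`, the constant function `1`. -/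
def gS (N : ℕ) (d : Fin N → ℕ) : ((i : Fin N) → Fin (d i)) → ℂ := fun _ => 1

/-- The full collection of product states attached to the subcubes
`B₀` and `P_{k,K}` (`1 ≤ k ≤ L`, `K` even, `P ∈ {C, D}`). -/
noncomputable def gBasisSet (N : ℕ) (d : Fin N → ℕ) (L : ℕ) :
    Set (((i : Fin N) → Fin (d i)) → ℂ) :=
  {ψ | ∃ n : Fin N → ℕ, (∀ i, n i < d i - 2 * L) ∧ ψ = gAttB0 N d L n} ∪
    {ψ | ∃ k K b n, 1 ≤ k ∧ k ≤ L ∧ Even (Finset.card K) ∧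
      (∀ i, n i < ghi N d k K b i - glo N d k K b i + 1) ∧ ψ = gAtt N d k K b n}

/-- The orthogonal product set `O_d` of all product states attached to the
first-layer subcubes `P_{1,K}`. -/
noncomputable def setOd (N : ℕ) (d : Fin N → ℕ) :
    Set (((i : Fin N) → Fin (d i)) → ℂ) :=
  {ψ | ∃ K b n, Even (Finset.card K) ∧
    (∀ i, n i < ghi N d 1 K b i - glo N d 1 K b i + 1) ∧ ψ = gAtt N d 1 K b n}

/-- The unextendible product basis `U_d`: the stopper `|S⟩` together with, for every
subcube `Q` in the decomposition, all its attached states other than `|Q⁺⟩`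
(the one with all Fourier indices `0`). -/
noncomputable def setUd (N : ℕ) (d : Fin N → ℕ) (L : ℕ) :
    Set (((i : Fin N) → Fin (d i)) → ℂ) :=
  {gS N d} ∪
    {ψ | ∃ n : Fin N → ℕ, (∀ i, n i < d i - 2 * L) ∧ (∃ i, n i ≠ 0) ∧
      ψ = gAttB0 N d L n} ∪
    {ψ | ∃ k K b n, 1 ≤ k ∧ k ≤ L ∧ Even (Finset.card K) ∧
      (∀ i, n i < ghi N d k K b i - glo N d k K b i + 1) ∧ (∃ i, n i ≠ 0) ∧
      ψ = gAtt N d k K b n}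

/-- Restriction of a vector to the coordinates other than `m`. -/
def gres (N : ℕ) (d : Fin N → ℕ) (m : Fin N) (v : (i : Fin N) → Fin (d i)) :
    (j : {i : Fin N // i ≠ m}) → Fin (d j.1) :=
  fun j => v j.1

/-- The operator `I_m ⊗ E` on `H_d`, where `E` is a matrix acting on the joint
party of all subsystems except `m`. -/
noncomputable def gopIE (N : ℕ) (d : Fin N → ℕ) (m : Fin N)
    (E : Matrix ((j : {i : Fin N // i ≠ m}) → Fin (d j.1))
      ((j : {i : Fin N // i ≠ m}) → Fin (d j.1)) ℂ)
    (ψ : ((i : Fin N) → Fin (d i)) → ℂ) : ((i : Fin N) → Fin (d i)) → ℂ :=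
  fun v => ∑ v' : (i : Fin N) → Fin (d i),
    if v' m = v m then E (gres N d m v) (gres N d m v') * ψ v' else 0

end SNL

namespace SNL

/-! ### Two-state automata -/

/-- The state at time `n` of the two-state automaton started at `p` whose transition at time `i`
is `f i`. -/
def run (f : ℕ → Bool → Bool) (p : Bool) : ℕ → Bool
  | 0 => p
  | n + 1 => f n (run f p n)

lemma run_eq_of_const (f : ℕ → Bool → Bool) (n : ℕ)
    (h : ∃ i < n, f i false = f i true) (p q : Bool) : run f p n = run f q n := by
  induction n with
  | zero => obtain ⟨i, hi, _⟩ := h; omega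
  | succ n ih =>
    obtain ⟨i, hi, hf⟩ := h
    rcases Nat.lt_succ_iff_lt_or_eq.1 hi with hi | rfl
    · simp only [run, ih ⟨i, hi, hf⟩]
    · simp only [run]
      cases run f p i <;> cases run f q i <;> simp [hf]

lemma run_eq_of_swap (f : ℕ → Bool → Bool) (n : ℕ)
    (h : ∀ i < n, ∀ q, f i q = !q) (p : Bool) : run f p n = (p ^^ decide (Odd n)) := by
  induction n with
  | zero => simp [run]
  | succ n ih =>
    simp only [run, h n (by omega), ih fun i hi => h i (by omega)]
    by_cases hn : Odd n <;> simp [hn, Nat.odd_add_one]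

/-- The times before `N` at which the run started at `p` changes state. -/
def changes (N : ℕ) (f : ℕ → Bool → Bool) (p : Bool) : Finset (Fin N) :=
  {i | run f p i.val ≠ run f p (i.val + 1)}

lemma even_changes_iff (N : ℕ) (f : ℕ → Bool → Bool) (p : Bool) :
    Even (changes N f p).card ↔ run f p N = p := by
  have h : (changes N f p).card =
      ∑ i ∈ Finset.range N, if run f p i ≠ run f p (i + 1) then 1 else 0 := by
    rw [changes, Finset.card_filter,
      ← Fin.sum_univ_eq_sum_range (fun i => if run f p i ≠ run f p (i + 1) then 1 else 0)]
  rw [h]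
  clear h
  induction N with
  | zero => simp [run]
  | succ n ih =>
    rw [Finset.sum_range_succ]
    split_ifs with h
    · refine Nat.even_add_one.trans ((not_congr ih).trans ?_)
      revert h
      cases run f p n <;> cases run f p (n + 1) <;> cases p <;> simp
    · rw [add_zero, ← not_not.1 h]
      exact ih

/-! ### Subcubes as runs of the automaton -/

/-- The transition at coordinate `i` determined by `v`: it is constantly low if `v i = k - 1`,
constantly high if `v i = d i - k`, and otherwise the swap. Beyond the `N` coordinates it is the
identity, a choice that plays no role. -/
def step (N : ℕ) (d : Fin N → ℕ) (k : ℕ) (v : (i : Fin N) → Fin (d i)) (i : ℕ) (p : Bool) :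
    Bool :=
  if h : i < N then
    bif p then decide ((v ⟨i, h⟩ : ℕ) = d ⟨i, h⟩ - k) else decide ((v ⟨i, h⟩ : ℕ) ≠ k - 1)
  else p

/-- A coordinate lies in the component of `P_{k,K}` iff it is in the outer range and its transition
leads from the previous side, obtained by undoing the flip of `K` at `i`, to the current one. -/
lemma mem_gcomp_iff (N : ℕ) (d : Fin N → ℕ) (k : ℕ) (hk : 1 ≤ k) (hd : ∀ i, 2 * k + 1 ≤ d i)
    (v : (i : Fin N) → Fin (d i)) (K : Finset (Fin N)) (b : Bool) (i : Fin N) :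
    (v i : ℕ) ∈ gcomp N d k K b i ↔
      (v i : ℕ) ∈ Finset.Icc (k - 1) (d i - k) ∧
        side N K b i = step N d k v i (side N K b i ^^ decide (i ∈ K)) := by
  have := hd i
  simp only [gcomp, glo, ghi, step, Finset.mem_Icc, i.isLt, dif_pos, Fin.eta]
  by_cases hi : i ∈ K <;> cases side N K b i <;> simp [hi] <;> omega

lemma side_succ (N : ℕ) (K : Finset (Fin N)) (b : Bool) (i : ℕ) (h : i + 1 < N) :
    side N K b (i + 1) = (side N K b i ^^ decide ((⟨i + 1, h⟩ : Fin N) ∈ K)) := by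
  have : (i + 1 ∈ K.image Fin.val) ↔ (⟨i + 1, h⟩ : Fin N) ∈ K := by
    simp only [Finset.mem_image]
    constructor
    · rintro ⟨j, hj, e⟩
      have : j = ⟨i + 1, h⟩ := Fin.ext e
      rwa [← this]
    · exact fun hm => ⟨_, hm, rfl⟩
  simp only [side, this]

lemma mem_gcube_iff (N : ℕ) (hN : 0 < N) (d : Fin N → ℕ) (k : ℕ) (hk : 1 ≤ k)
    (hd : ∀ i, 2 * k + 1 ≤ d i) (v : (i : Fin N) → Fin (d i)) (K : Finset (Fin N)) (b : Bool) :
    v ∈ gcube N d k K b ↔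
      (∀ i, (v i : ℕ) ∈ Finset.Icc (k - 1) (d i - k)) ∧
        ∃ p, b = run (step N d k v) p 1 ∧ K = changes N (step N d k v) p := by
  simp only [gcube, Set.mem_ofPred_eq, mem_gcomp_iff N d k hk hd, forall_and]
  refine and_congr_right fun _ => ⟨fun h => ?_, ?_⟩
  · refine ⟨b ^^ decide ((⟨0, hN⟩ : Fin N) ∈ K), ?_⟩
    set p := b ^^ decide ((⟨0, hN⟩ : Fin N) ∈ K) with hp
    -- The state before time `i` is the side at `i` with the flip of `K` at `i` undone.
    have key : ∀ i (hi : i < N), run (step N d k v) p i =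
        (side N K b i ^^ decide ((⟨i, hi⟩ : Fin N) ∈ K)) ∧
        run (step N d k v) p (i + 1) = side N K b i := by
      intro i
      induction i with
      | zero =>
        intro hi
        refine ⟨by simp [run, hp, side], ?_⟩
        rw [h ⟨0, hi⟩]
        simp [run, hp, side]
      | succ i ih =>
        intro hi
        have h1 : run (step N d k v) p (i + 1) =
            (side N K b (i + 1) ^^ decide ((⟨i + 1, hi⟩ : Fin N) ∈ K)) := by
          rw [(ih (by omega)).2, side_succ N K b i hi]
          simp
        refine ⟨h1, ?_⟩
        rw [h ⟨i + 1, hi⟩, run, h1]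
    refine ⟨(key 0 hN).2.symm, ?_⟩
    ext i
    simp only [changes, Finset.mem_filter, Finset.mem_univ, true_and, (key i i.isLt).1,
      (key i i.isLt).2]
    by_cases hi : i ∈ K <;> simp [hi]
  · rintro ⟨p, rfl, rfl⟩
    set f := step N d k v with hf
    have hdec : ∀ i : Fin N, decide (i ∈ changes N f p) =
        (run f p i.val ^^ run f p (i.val + 1)) := by
      intro i
      simp only [changes, Finset.mem_filter, Finset.mem_univ, true_and]
      cases run f p i.val <;> cases run f p (i.val + 1) <;> simp
    have key : ∀ i, i < N → side N (changes N f p) (run f p 1) i = run f p (i + 1) := by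
      intro i
      induction i with
      | zero => simp [side]
      | succ i ih =>
        intro hi
        rw [side_succ _ _ _ _ hi, ih (by omega), hdec]
        simp
    intro i
    rw [key i i.isLt, hdec]
    cases h1 : run f p i.val <;> cases h2 : run f p (i.val + 1) <;>
      simp_all [run]

/-! ### Closed runs and layers -/

lemma two_mul_add_one_le {N : ℕ} {d : Fin N → ℕ} (h0 : 0 < N) (hd : ∀ i, 3 ≤ d i)
    (hmono : Monotone d) {L : ℕ} (hL : L = (d ⟨0, h0⟩ - 1) / 2) {k : ℕ} (hk : k ≤ L)
    (i : Fin N) : 2 * k + 1 ≤ d i := by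
  have h1 : d ⟨0, h0⟩ ≤ d i := hmono (Fin.le_def.2 (Nat.zero_le _))
  have h2 := hd ⟨0, h0⟩
  omega

/-- A transition is constant exactly at the extremal values of a coordinate. -/
lemma step_const_iff {N : ℕ} {d : Fin N → ℕ} {k : ℕ} (hk : 1 ≤ k) (hd : ∀ i, 2 * k + 1 ≤ d i)
    {v : (i : Fin N) → Fin (d i)} {i : Fin N}
    (hv : (v i : ℕ) ∈ Finset.Icc (k - 1) (d i - k)) :
    step N d k v i false = step N d k v i true ↔
      (v i : ℕ) ∉ Finset.Icc k (d i - k - 1) := by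
  have := hd i
  simp only [step, i.isLt, dif_pos, Fin.eta, cond_true, cond_false, decide_eq_decide]
  rw [Finset.mem_Icc] at hv ⊢
  omega

lemma step_swap {N : ℕ} {d : Fin N → ℕ} {k : ℕ} (hk : 1 ≤ k) (hd : ∀ i, 2 * k + 1 ≤ d i)
    {v : (i : Fin N) → Fin (d i)} {i : Fin N}
    (hv : (v i : ℕ) ∈ Finset.Icc k (d i - k - 1)) (q : Bool) :
    step N d k v i q = !q := by
  have := hd i
  rw [Finset.mem_Icc] at hv
  cases q <;> simp [step] <;> omega

/-- A vector of the outer box on which the automaton has a closed run belongs to the layer: if all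
coordinates were interior, the run would be an odd number of swaps. -/
lemma mem_layer_of_closed {N : ℕ} (hodd : Odd N) {d : Fin N → ℕ} {k : ℕ} (hk : 1 ≤ k)
    (hd : ∀ i, 2 * k + 1 ≤ d i) {v : (i : Fin N) → Fin (d i)}
    (hv : ∀ i, (v i : ℕ) ∈ Finset.Icc (k - 1) (d i - k)) {p : Bool}
    (hp : run (step N d k v) p N = p) : v ∈ layer N d k := by
  refine ⟨hv, fun hin => ?_⟩
  rw [run_eq_of_swap _ N (fun i hi q => step_swap (i := ⟨i, hi⟩) hk hd (hin ⟨i, hi⟩) q)] at hp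
  simp [hodd] at hp

lemma run_eq_of_mem_layer {N : ℕ} {d : Fin N → ℕ} {k : ℕ} (hk : 1 ≤ k)
    (hd : ∀ i, 2 * k + 1 ≤ d i) {v : (i : Fin N) → Fin (d i)} (hv : v ∈ layer N d k)
    (p q : Bool) : run (step N d k v) p N = run (step N d k v) q N := by
  obtain ⟨h1, h2⟩ := hv
  obtain ⟨i, hi⟩ := not_forall.1 h2
  exact run_eq_of_const _ N ⟨i, i.isLt, (step_const_iff hk hd (h1 i)).2 hi⟩ p q

/-! ### Nested boxes -/

/-- The inner boxes decrease, so the vectors of a box at depth `m ≥ k` avoid layer `k`. -/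
lemma not_mem_layer {N : ℕ} {d : Fin N → ℕ} {k m : ℕ} (hkm : k ≤ m)
    {v : (i : Fin N) → Fin (d i)} (hv : ∀ i, (v i : ℕ) ∈ Finset.Icc m (d i - m - 1)) :
    v ∉ layer N d k := by
  refine fun h => h.2 fun i => ?_
  have := hv i
  rw [Finset.mem_Icc] at this ⊢
  omega

lemma disjoint_layer {N : ℕ} {d : Fin N → ℕ} {k k' : ℕ} (h : k < k') :
    Disjoint (layer N d k) (layer N d k') := by
  rw [Set.disjoint_left]
  refine fun v hv hv' => not_mem_layer (m := k' - 1) (by omega) (fun i => ?_) hv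
  have := hv'.1 i
  rw [Finset.mem_Icc] at this ⊢
  omega

/-- For each `1 ≤ k ≤ L`, the `2^N` subcubes `P_{k,K}` (`K` even, `P ∈ {C,D}`)
are pairwise disjoint with union the layer
`L_k = ∏ᵢ {k-1, …, d_i-k} ∖ ∏ᵢ {k, …, d_i-k-1}`; moreover `Z` is the disjoint
union of `B₀` and the layers `L_1, …, L_L`. -/
theorem layer_decomposition (N : ℕ) (hodd : Odd N) (hN : 3 ≤ N)
    (d : Fin N → ℕ) (hd : ∀ i, 3 ≤ d i) (hmono : Monotone d)
    (L : ℕ) (hL : L = (d ⟨0, by omega⟩ - 1) / 2) :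
    (∀ k : ℕ, 1 ≤ k → k ≤ L →
      (∀ K K' : Finset (Fin N), ∀ b b' : Bool, Even K.card → Even K'.card →
          (K, b) ≠ (K', b') →
          Disjoint (gcube N d k K b) (gcube N d k K' b')) ∧
      ({v | ∃ K b, Even (Finset.card K) ∧ v ∈ gcube N d k K b} = layer N d k)) ∧
    (∀ k k' : ℕ, 1 ≤ k → k ≤ L → 1 ≤ k' → k' ≤ L → k ≠ k' →
        Disjoint (layer N d k) (layer N d k')) ∧
    (∀ k : ℕ, 1 ≤ k → k ≤ L → Disjoint (gB0 N d L) (layer N d k)) ∧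
    (gB0 N d L ∪ {v | ∃ k, 1 ≤ k ∧ k ≤ L ∧ v ∈ layer N d k} = Set.univ) := by
  have h0 : 0 < N := by omega
  refine ⟨fun k hk hkL => ?_, ?_, ?_, ?_⟩
  · have hdk : ∀ i, 2 * k + 1 ≤ d i := two_mul_add_one_le h0 hd hmono hL hkL
    constructor
    · intro K K' b b' hK hK' hne
      rw [Set.disjoint_left]
      intro v hv hv'
      rw [mem_gcube_iff N h0 d k hk hdk] at hv hv'
      obtain ⟨hbox, p, rfl, rfl⟩ := hv
      obtain ⟨-, q, rfl, rfl⟩ := hv'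
      rw [even_changes_iff] at hK hK'
      have hpq : p = q := by
        have h := run_eq_of_mem_layer hk hdk (mem_layer_of_closed hodd hk hdk hbox hK) p q
        rwa [hK, hK'] at h
      exact hne (by rw [hpq])
    · ext v
      constructor
      · rintro ⟨K, b, hK, hv⟩
        rw [mem_gcube_iff N h0 d k hk hdk] at hv
        obtain ⟨hbox, p, rfl, rfl⟩ := hv
        exact mem_layer_of_closed hodd hk hdk hbox ((even_changes_iff _ _ _).1 hK)
      · intro hv
        -- The common final state of all runs is the fixed point of the composition.
        set p := run (step N d k v) false N with hp
        refine ⟨changes N (step N d k v) p, run (step N d k v) p 1,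
          (even_changes_iff _ _ _).2 (run_eq_of_mem_layer hk hdk hv p false),
          (mem_gcube_iff N h0 d k hk hdk _ _ _).2 ⟨hv.1, p, rfl, rfl⟩⟩
  · intro k k' _ _ _ _ hne
    rcases Nat.lt_or_gt_of_ne hne with h | h
    · exact disjoint_layer h
    · exact (disjoint_layer h).symm
  · intro k _ hkL
    exact Set.disjoint_left.2 fun v hv => not_mem_layer hkL hv
  · refine Set.eq_univ_of_forall fun v => or_iff_not_imp_left.2 fun hv => ?_
    classical
    -- The layer of `v` is the first index whose inner box misses `v`.
    have hex : ∃ k, ¬ ∀ i, (v i : ℕ) ∈ Finset.Icc k (d i - k - 1) := ⟨L, hv⟩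
    have hpos : 1 ≤ Nat.find hex := by
      rw [Nat.one_le_iff_ne_zero]
      intro h
      apply (Nat.find_eq_zero hex).1 h
      intro i
      have := (v i).isLt
      rw [Finset.mem_Icc]
      omega
    refine ⟨Nat.find hex, hpos, Nat.find_min' hex hv, fun i => ?_, Nat.find_spec hex⟩
    have h := not_not.1 (Nat.find_min hex (m := Nat.find hex - 1) (by omega)) i
    rw [Finset.mem_Icc] at h ⊢
    omega

end SNL
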